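/- Let λ be a Borel probability measure on [0,1] and let 𝒫¹ and 𝒫² be two sequences of partitions that are log-balanced in measure with respect to λ, with weight functions f₁ and f₂ respectively. Assume: (i) 𝒫² is self-refining; (ii) f₂ is nondecreasing; (iii) f₂(n+1) − f₂(n) = o(f₂(n)) as n → ∞. Then f₂(L_n(x,𝒫¹,𝒫²))/f₁(n) → 1 as n → ∞ in λ-measure. -/

import Mathlib

open MeasureTheory Filter Set Asymptotics

noncomputable section

/-- A topological partition of `[0,1]`: an (automatically at most countable) collection of
pairwise disjoint nonempty open subintervals of `[0,1]` whose closures cover `[0,1]`. -/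
def IsTopPartition (P : Set (Set ℝ)) : Prop :=
  P.Countable ∧
  (∀ I ∈ P, ∃ a b : ℝ, a < b ∧ 0 ≤ a ∧ b ≤ 1 ∧ I = Set.Ioo a b) ∧
  P.PairwiseDisjoint id ∧
  (⋃ I ∈ P, closure I) = Set.Icc (0 : ℝ) 1

/-- The set `E^Ps` of endpoints of the intervals of the partitions of the sequence `Ps`:
the points of `[0,1]` not covered by the open intervals of some partition. -/
def endpointSet (Ps : ℕ → Set (Set ℝ)) : Set ℝ :=
  ⋃ n, (Set.Icc (0 : ℝ) 1 \ ⋃₀ Ps n)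

/-- `I_n^Ps(x)`: the unique interval of the partition `P` containing `x`
(the empty set if there is none). -/
def cell (P : Set (Set ℝ)) (x : ℝ) : Set ℝ :=
  ⋃₀ {I | I ∈ P ∧ x ∈ I}

/-- A sequence of partitions is self-refining if every interval at depth `n+1` is contained
in an interval at depth `n`. -/
def SelfRefining (Ps : ℕ → Set (Set ℝ)) : Prop :=
  ∀ n, ∀ I ∈ Ps (n + 1), ∃ J ∈ Ps n, I ⊆ J

/-- Strictly self-refining: self-refining with `P_{n+1} ≠ P_n` for all `n`. -/
def StrictSelfRefining (Ps : ℕ → Set (Set ℝ)) : Prop :=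
  SelfRefining Ps ∧ ∀ n, Ps (n + 1) ≠ Ps n

/-- `Ps` is log-balanced a.e. with respect to `lam` with weight function `f`. -/
def LogBalancedAE (lam : Measure ℝ) (Ps : ℕ → Set (Set ℝ)) (f : ℕ → ℝ) : Prop :=
  lam (endpointSet Ps) = 0 ∧ Tendsto f atTop atTop ∧
    ∀ᵐ x ∂lam,
      Tendsto (fun n => -Real.log ((lam (cell (Ps n) x)).toReal) / f n) atTop (nhds 1)

/-- `Ps` is log-balanced in measure with respect to `lam` with weight function `f`. -/
def LogBalancedInMeasure (lam : Measure ℝ) (Ps : ℕ → Set (Set ℝ)) (f : ℕ → ℝ) : Prop :=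
  lam (endpointSet Ps) = 0 ∧ Tendsto f atTop atTop ∧
    TendstoInMeasure lam
      (fun n x => -Real.log ((lam (cell (Ps n) x)).toReal) / f n) atTop (fun _ => 1)

/-- The Lochs index `L_n(x, Ps¹, Ps²)`. -/
def lochsIndex (P1 P2 : ℕ → Set (Set ℝ)) (n : ℕ) (x : ℝ) : ℕ :=
  sSup {ℓ : ℕ | cell (P1 n) x ⊆ cell (P2 ℓ) x}

/-- The generalized inverse `f^{[-1]}(y) = min {n : f n ≥ y}` of a weight function. -/
def weightInv (f : ℕ → ℝ) (y : ℝ) : ℕ := sInf {n : ℕ | y ≤ f n}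

theorem cell_eq_of_mem {P : Set (Set ℝ)} (hP : IsTopPartition P) {I : Set ℝ} (hI : I ∈ P)
    {x : ℝ} (hx : x ∈ I) : cell P x = I := by
  unfold cell
  have : {J | J ∈ P ∧ x ∈ J} = {I} := by
    ext J
    simp only [Set.mem_setOf_eq, Set.mem_singleton_iff]
    constructor
    · rintro ⟨hJ, hxJ⟩
      by_contra hne
      have := hP.2.2.1 hJ hI hne
      exact Set.disjoint_left.mp this hxJ hx
    · rintro rfl
      exact ⟨hI, hx⟩
  rw [this, Set.sUnion_singleton]

theorem bad_measure (lam : Measure ℝ) [IsProbabilityMeasure lam] {P Q : Set (Set ℝ)}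
    (hP : IsTopPartition P) (hQ : IsTopPartition Q) {s t : ℝ} (hs : 0 < s) (ht : 0 < t) :
    lam {x | ∃ I ∈ P, ∃ J ∈ Q, x ∈ I ∧ x ∈ J ∧ ¬ I ⊆ J ∧ lam.real I ≤ s ∧ t ≤ lam.real J}
      ≤ ENNReal.ofReal (2 * s / t) := by
  classical
  set C : ℝ → Set ℝ := fun p => if lam.real (cell P p) ≤ s then cell P p else ∅ with hC
  have hCs : ∀ p, lam (C p) ≤ ENNReal.ofReal s := by
    intro p
    simp only [hC]
    split_ifs with h
    · rw [← ENNReal.ofReal_toReal (measure_ne_top lam (cell P p))]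
      exact ENNReal.ofReal_le_ofReal h
    · simp
  set F : Set (Set ℝ) := {J | J ∈ Q ∧ t ≤ lam.real J} with hF
  have hFc : F.Countable := hQ.1.mono (fun J hJ => hJ.1)
  choose! a b hab using hQ.2.1
  have hsub : {x | ∃ I ∈ P, ∃ J ∈ Q, x ∈ I ∧ x ∈ J ∧ ¬ I ⊆ J ∧ lam.real I ≤ s ∧ t ≤ lam.real J}
      ⊆ ⋃ J ∈ F, (C (a J) ∪ C (b J)) := by
    rintro x ⟨I, hI, J, hJ, hxI, hxJ, hn, hIs, hJt⟩
    simp only [Set.mem_iUnion]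
    refine ⟨J, ⟨hJ, hJt⟩, ?_⟩
    have key : ∀ p ∈ I, x ∈ C p := by
      intro p hp
      simp only [hC]
      rw [cell_eq_of_mem hP hI hp, if_pos hIs]
      exact hxI
    obtain ⟨u, v, huv, -, -, hIe⟩ := hP.2.1 I hI
    obtain ⟨-, -, -, hJe⟩ := hab J hJ
    have hxJ' : x ∈ Set.Ioo (a J) (b J) := hJe ▸ hxJ
    have hxI' : x ∈ Set.Ioo u v := hIe ▸ hxI
    by_cases h1 : u < a J
    · left
      apply key
      rw [hIe]
      exact ⟨h1, hxJ'.1.trans hxI'.2⟩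
    · right
      apply key
      rw [hIe]
      refine ⟨hxI'.1.trans hxJ'.2, ?_⟩
      by_contra h2
      apply hn
      rw [hIe, hJe]
      exact Set.Ioo_subset_Ioo (not_lt.mp h1) (not_lt.mp h2)
  have hdisj : F.PairwiseDisjoint id := hQ.2.2.1.subset (fun J hJ => hJ.1)
  have hmeas : ∀ J ∈ F, MeasurableSet (id J : Set ℝ) := by
    intro J hJ
    obtain ⟨-, -, -, hJe⟩ := hab J hJ.1
    rw [id, hJe]
    exact measurableSet_Ioo
  calc _ ≤ lam (⋃ J ∈ F, (C (a J) ∪ C (b J))) := measure_mono hsub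
    _ ≤ ∑' J : F, lam (C (a J) ∪ C (b J)) := measure_biUnion_le lam hFc _
    _ ≤ ∑' J : F, ENNReal.ofReal (2 * s / t) * lam (id (J : Set ℝ)) := by
        apply ENNReal.tsum_le_tsum
        rintro ⟨J, hJ⟩
        calc lam (C (a J) ∪ C (b J)) ≤ lam (C (a J)) + lam (C (b J)) := measure_union_le _ _
          _ ≤ ENNReal.ofReal s + ENNReal.ofReal s := add_le_add (hCs _) (hCs _)
          _ = ENNReal.ofReal (2 * s / t * t) := by
            rw [← ENNReal.ofReal_add hs.le hs.le]
            congr 1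
            field_simp
            ring
          _ = ENNReal.ofReal (2 * s / t) * ENNReal.ofReal t :=
            ENNReal.ofReal_mul (by positivity)
          _ ≤ _ := by
            gcongr
            exact (ENNReal.ofReal_le_iff_le_toReal (measure_ne_top lam _)).2 hJ.2
    _ = ENNReal.ofReal (2 * s / t) * lam (⋃ J ∈ F, id J) := by
        rw [ENNReal.tsum_mul_left, measure_biUnion hFc hdisj hmeas]
    _ ≤ ENNReal.ofReal (2 * s / t) * 1 := by
        gcongr
        exact prob_le_one
    _ = _ := mul_one _

theorem log_bounds {v F δ : ℝ} (hv : 0 ≤ v) (hF : 0 < F) (hδ : δ < 1)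
    (h : |-Real.log v / F - 1| < δ) :
    Real.exp (-((1 + δ) * F)) ≤ v ∧ v ≤ Real.exp (-((1 - δ) * F)) := by
  have hv0 : 0 < v := by
    rcases hv.lt_or_eq with h' | h'
    · exact h'
    · subst h'
      simp at h
      linarith
  rw [abs_lt] at h
  have h1 : -Real.log v / F < 1 + δ := by linarith [h.2]
  have h2 : 1 - δ < -Real.log v / F := by linarith [h.1]
  rw [div_lt_iff₀ hF] at h1
  rw [lt_div_iff₀ hF] at h2
  constructor
  · rw [← Real.le_log_iff_exp_le hv0]; linarith
  · rw [← Real.log_le_iff_le_exp hv0]; linarith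

theorem weightInv_spec {f : ℕ → ℝ} (hf : Tendsto f atTop atTop) (y : ℝ) :
    y ≤ f (weightInv f y) := by
  have hne : {n : ℕ | y ≤ f n}.Nonempty := (hf.eventually_ge_atTop y).exists
  exact Nat.sInf_mem hne

theorem lt_of_lt_weightInv {f : ℕ → ℝ} {y : ℝ} {k : ℕ} (hk : k < weightInv f y) : f k < y := by
  have := Nat.notMem_of_lt_sInf hk
  simpa using this

theorem weightInv_tendsto {f : ℕ → ℝ} (hf : Tendsto f atTop atTop) (hm : Monotone f) :
    Tendsto (weightInv f) atTop atTop := by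
  rw [tendsto_atTop]
  intro K
  filter_upwards [eventually_gt_atTop (f K)] with y hy
  by_contra h
  push Not at h
  linarith [hm h.le, weightInv_spec hf y]

theorem not_mem_bad {u δ : ℝ} (h : ¬ ENNReal.ofReal δ ≤ edist u 1) : |u - 1| < δ := by
  rw [edist_dist, Real.dist_eq, not_le] at h
  exact (ENNReal.ofReal_lt_ofReal_iff_of_nonneg (abs_nonneg _)).1 h

theorem cell_anti {P : ℕ → Set (Set ℝ)} (hP : ∀ n, IsTopPartition (P n)) (hs : SelfRefining P)
    {x : ℝ} (hx : ∀ n, ∃ I ∈ P n, x ∈ I) : Antitone (fun n => cell (P n) x) := by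
  apply antitone_nat_of_succ_le
  intro n
  obtain ⟨I, hI, hxI⟩ := hx (n + 1)
  obtain ⟨J, hJ, hIJ⟩ := hs n I hI
  rw [cell_eq_of_mem (hP _) hI hxI, cell_eq_of_mem (hP _) hJ (hIJ hxI)]
  exact hIJ

theorem exists_mem_of_notMem {P : ℕ → Set (Set ℝ)} {x : ℝ} (hx : x ∈ Set.Icc (0 : ℝ) 1)
    (hn : x ∉ endpointSet P) (n : ℕ) : ∃ I ∈ P n, x ∈ I := by
  by_contra h
  apply hn
  refine Set.mem_iUnion.2 ⟨n, hx, ?_⟩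
  rintro ⟨I, hI, hxI⟩
  exact h ⟨I, hI, hxI⟩

/-- Theorem (Lochs-type theorem in measure). -/
theorem lochs_type_in_measure (lam : Measure ℝ) [IsProbabilityMeasure lam]
    (hlam : lam (Set.Icc (0 : ℝ) 1)ᶜ = 0)
    (P1 P2 : ℕ → Set (Set ℝ))
    (hP1 : ∀ n, IsTopPartition (P1 n)) (hP2 : ∀ n, IsTopPartition (P2 n))
    (f₁ f₂ : ℕ → ℝ)
    (hb1 : LogBalancedInMeasure lam P1 f₁) (hb2 : LogBalancedInMeasure lam P2 f₂)
    (hself : SelfRefining P2)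
    (hmono : Monotone f₂)
    (hlittle : (fun n => f₂ (n + 1) - f₂ n) =o[atTop] f₂) :
    TendstoInMeasure lam
      (fun n x => f₂ (lochsIndex P1 P2 n x) / f₁ n) atTop (fun _ => (1 : ℝ)) := by
  obtain ⟨hE1, hf1, hm1⟩ := hb1
  obtain ⟨hE2, hf2, hm2⟩ := hb2
  apply tendstoInMeasure_of_ne_top
  intro ε₀ hε₀ hε₀t
  set e : ℝ := min ε₀.toReal 1 with he
  have he0 : 0 < e := lt_min (ENNReal.toReal_pos hε₀.ne' hε₀t) one_pos
  have he1 : e ≤ 1 := min_le_right _ _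
  have hee : ENNReal.ofReal e ≤ ε₀ :=
    (ENNReal.ofReal_le_ofReal (min_le_left _ _)).trans (ENNReal.ofReal_toReal hε₀t).le
  set δ : ℝ := e / 8 with hδ
  have hδ0 : 0 < δ := by positivity
  set A1 : ℕ → Set ℝ := fun n => {x | ENNReal.ofReal δ ≤
    edist (-Real.log ((lam (cell (P1 n) x)).toReal) / f₁ n) 1} with hA1
  set A2 : ℕ → Set ℝ := fun n => {x | ENNReal.ofReal δ ≤
    edist (-Real.log ((lam (cell (P2 n) x)).toReal) / f₂ n) 1} with hA2
  have tA1 : Tendsto (fun n => lam (A1 n)) atTop (nhds 0) :=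
    hm1 (ENNReal.ofReal δ) (ENNReal.ofReal_pos.2 hδ0)
  have tA2 : Tendsto (fun n => lam (A2 n)) atTop (nhds 0) :=
    hm2 (ENNReal.ofReal δ) (ENNReal.ofReal_pos.2 hδ0)
  set M : ℕ → ℕ := fun n => weightInv f₂ ((1 + e) * f₁ n) with hM
  set K : ℕ → ℕ := fun n => weightInv f₂ ((1 - e / 2) * f₁ n) - 1 with hK
  have tM : Tendsto M atTop atTop :=
    (weightInv_tendsto hf2 hmono).comp (hf1.const_mul_atTop (by linarith))
  have tK' : Tendsto (fun n => weightInv f₂ ((1 - e / 2) * f₁ n)) atTop atTop :=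
    (weightInv_tendsto hf2 hmono).comp (hf1.const_mul_atTop (by linarith))
  have tK : Tendsto K atTop atTop := (tendsto_sub_atTop_nat 1).comp tK'
  set B : ℕ → Set ℝ := fun n => {x | ∃ I ∈ P1 n, ∃ J ∈ P2 (K n), x ∈ I ∧ x ∈ J ∧ ¬ I ⊆ J ∧
    lam.real I ≤ Real.exp (-((1 - δ) * f₁ n)) ∧
    Real.exp (-((1 + δ) * ((1 - e / 2) * f₁ n))) ≤ lam.real J} with hB
  have hBm : ∀ n, lam (B n) ≤ ENNReal.ofReal (2 *
      Real.exp (-((1 - δ) - (1 + δ) * (1 - e / 2)) * f₁ n)) := by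
    intro n
    refine (bad_measure lam (hP1 n) (hP2 (K n)) (Real.exp_pos _) (Real.exp_pos _)).trans ?_
    apply le_of_eq
    congr 1
    rw [mul_div_assoc, ← Real.exp_sub]
    congr 2
    ring
  have hc : 0 < (1 - δ) - (1 + δ) * (1 - e / 2) := by rw [hδ]; nlinarith
  have tB' : Tendsto (fun n => ENNReal.ofReal (2 *
      Real.exp (-((1 - δ) - (1 + δ) * (1 - e / 2)) * f₁ n))) atTop (nhds 0) := by
    have h1 : Tendsto (fun n => -((1 - δ) - (1 + δ) * (1 - e / 2)) * f₁ n) atTop atBot :=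
      hf1.const_mul_atTop_of_neg (by linarith)
    have h2 := (Real.tendsto_exp_atBot.comp h1).const_mul 2
    have h3 := ENNReal.tendsto_ofReal h2
    simpa using h3
  have tB : Tendsto (fun n => lam (B n)) atTop (nhds 0) :=
    tendsto_of_tendsto_of_tendsto_of_le_of_le tendsto_const_nhds tB' (fun _ => zero_le) hBm
  set N : Set ℝ := (Set.Icc (0 : ℝ) 1)ᶜ ∪ endpointSet P1 ∪ endpointSet P2 with hN
  have hN0 : lam N = 0 := measure_union_null (measure_union_null hlam hE1) hE2
  have tsum : Tendsto (fun n => lam (A1 n) + lam (A2 (M n)) + lam (A2 (K n)) + lam (B n))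
      atTop (nhds 0) := by
    simpa using ((tA1.add (tA2.comp tM)).add (tA2.comp tK)).add tB
  refine tendsto_of_tendsto_of_tendsto_of_le_of_le' tendsto_const_nhds tsum
    (Eventually.of_forall fun _ => zero_le) ?_
  have hlit : ∀ᶠ k in atTop, f₂ (k + 1) ≤ (1 + δ) * f₂ k := by
    filter_upwards [hlittle.bound hδ0, hf2.eventually_gt_atTop 0] with k hk hk0
    rw [Real.norm_eq_abs, Real.norm_eq_abs, abs_of_pos hk0] at hk
    linarith [le_abs_self (f₂ (k + 1) - f₂ k)]
  filter_upwards [hf1.eventually_gt_atTop 0, tM.eventually_gt_atTop 0, tK'.eventually_gt_atTop 0,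
    tK.eventually hlit, tM.eventually (hf2.eventually_gt_atTop 0),
    tK.eventually (hf2.eventually_gt_atTop 0)] with n hf1n hMn hKn hKl hMf hKf
  have hsub : {x | ε₀ ≤ edist (f₂ (lochsIndex P1 P2 n x) / f₁ n) 1} ⊆
      N ∪ (A1 n ∪ A2 (M n) ∪ A2 (K n) ∪ B n) := by
    intro x hx
    by_contra hcon
    simp only [Set.mem_union, not_or] at hcon
    obtain ⟨hxN, ⟨⟨hx1, hxM⟩, hxK⟩, hxB⟩ := hcon
    simp only [hN, Set.mem_union, not_or, Set.mem_compl_iff, not_not] at hxN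
    obtain ⟨⟨hx01, hxE1⟩, hxE2⟩ := hxN
    have b1 := log_bounds ENNReal.toReal_nonneg hf1n (by linarith) (not_mem_bad hx1)
    have bM := log_bounds ENNReal.toReal_nonneg hMf (by linarith) (not_mem_bad hxM)
    have bK := log_bounds ENNReal.toReal_nonneg hKf (by linarith) (not_mem_bad hxK)
    have hanti := cell_anti hP2 hself (exists_mem_of_notMem hx01 hxE2)
    have hMspec : (1 + e) * f₁ n ≤ f₂ (M n) := weightInv_spec hf2 _
    have hKdef : K n = weightInv f₂ ((1 - e / 2) * f₁ n) - 1 := rfl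
    have hKlt : f₂ (K n) < (1 - e / 2) * f₁ n := lt_of_lt_weightInv (by omega)
    have hKge : (1 - e / 2) * f₁ n ≤ f₂ (K n + 1) := by
      have := weightInv_spec hf2 ((1 - e / 2) * f₁ n)
      have h2 : K n + 1 = weightInv f₂ ((1 - e / 2) * f₁ n) := by omega
      rwa [h2]
    -- upper bound
    have hnotM : ¬ cell (P1 n) x ⊆ cell (P2 (M n)) x := by
      intro hss
      have h1 := ENNReal.toReal_mono (measure_ne_top lam _) (measure_mono (μ := lam) hss)
      have h2 := Real.exp_le_exp.1 (b1.1.trans (h1.trans bM.2))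
      have h3 : (1 - δ) * ((1 + e) * f₁ n) ≤ (1 - δ) * f₂ (M n) :=
        mul_le_mul_of_nonneg_left hMspec (by linarith)
      have h4 : 0 < ((1 - δ) * (1 + e) - (1 + δ)) * f₁ n := by
        apply mul_pos _ hf1n
        rw [hδ]; nlinarith
      nlinarith
    have hbd : ∀ l ∈ {l : ℕ | cell (P1 n) x ⊆ cell (P2 l) x}, l < M n := by
      intro l hl
      by_contra h
      exact hnotM (Set.Subset.trans hl (hanti (not_lt.1 h)))
    -- lower bound
    have hKin : cell (P1 n) x ⊆ cell (P2 (K n)) x := by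
      by_contra hns
      apply hxB
      obtain ⟨I, hI, hxI⟩ := exists_mem_of_notMem hx01 hxE1 n
      obtain ⟨J, hJ, hxJ⟩ := exists_mem_of_notMem hx01 hxE2 (K n)
      rw [cell_eq_of_mem (hP1 n) hI hxI, cell_eq_of_mem (hP2 _) hJ hxJ] at hns
      rw [cell_eq_of_mem (hP1 n) hI hxI] at b1
      rw [cell_eq_of_mem (hP2 _) hJ hxJ] at bK
      refine ⟨I, hI, J, hJ, hxI, hxJ, hns, b1.2, le_trans ?_ bK.1⟩
      apply Real.exp_le_exp.2
      have := mul_le_mul_of_nonneg_left hKlt.le (by linarith : 0 ≤ 1 + δ)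
      linarith
    have hLmem : lochsIndex P1 P2 n x ∈ {l : ℕ | cell (P1 n) x ⊆ cell (P2 l) x} :=
      Nat.sSup_mem ⟨K n, hKin⟩ ⟨M n, fun l hl => (hbd l hl).le⟩
    have hLlt : f₂ (lochsIndex P1 P2 n x) < (1 + e) * f₁ n :=
      lt_of_lt_weightInv (hbd _ hLmem)
    have hLge : f₂ (K n) ≤ f₂ (lochsIndex P1 P2 n x) :=
      hmono (le_csSup ⟨M n, fun l hl => (hbd l hl).le⟩ hKin)
    have hKlow : (1 - e) * f₁ n < f₂ (K n) := by
      have h1 : (1 - e / 2) * f₁ n ≤ (1 + δ) * f₂ (K n) := hKge.trans hKl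
      have h2 : 0 < ((1 - e / 2) - (1 + δ) * (1 - e)) * f₁ n := by
        apply mul_pos _ hf1n
        rw [hδ]; nlinarith
      have h3 : (1 + δ) * ((1 - e) * f₁ n) < (1 + δ) * f₂ (K n) := by nlinarith
      exact lt_of_mul_lt_mul_left h3 (by linarith)
    have hfin : |f₂ (lochsIndex P1 P2 n x) / f₁ n - 1| < e := by
      rw [abs_lt]
      constructor
      · have : 1 - e < f₂ (lochsIndex P1 P2 n x) / f₁ n := by
          rw [lt_div_iff₀ hf1n]; linarith
        linarith
      · have : f₂ (lochsIndex P1 P2 n x) / f₁ n < 1 + e := by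
          rw [div_lt_iff₀ hf1n]; linarith
        linarith
    have hx' : ENNReal.ofReal e ≤ edist (f₂ (lochsIndex P1 P2 n x) / f₁ n) 1 := hee.trans hx
    rw [edist_dist, Real.dist_eq, ENNReal.ofReal_le_ofReal_iff (abs_nonneg _)] at hx'
    linarith
  calc _ ≤ lam (N ∪ (A1 n ∪ A2 (M n) ∪ A2 (K n) ∪ B n)) := measure_mono hsub
    _ ≤ lam N + lam (A1 n ∪ A2 (M n) ∪ A2 (K n) ∪ B n) := measure_union_le _ _
    _ = lam (A1 n ∪ A2 (M n) ∪ A2 (K n) ∪ B n) := by rw [hN0, zero_add]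
    _ ≤ lam (A1 n ∪ A2 (M n) ∪ A2 (K n)) + lam (B n) := measure_union_le _ _
    _ ≤ lam (A1 n ∪ A2 (M n)) + lam (A2 (K n)) + lam (B n) := by
      gcongr
      exact measure_union_le _ _
    _ ≤ _ := by
      gcongr
      exact measure_union_le _ _
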